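/- Let Q be the set of squarefree odd integers greater than 1 (the finite products of distinct odd primes), with sgn q = (−1)^n when q is a product of n distinct odd primes, and fix a bijective enumeration q_1, q_2, q_3, ... of Q. For positive integers k, i let δ(k,i) = 1 if q_i divides k and 0 otherwise, and let f(k) = Σ_{i=1}^∞ sgn(q_i)·δ(k,i) (a finite sum). Let x, y be real numbers with 1/2 < x < 1 and y > 0 such that ζ(x+iy) = 0, and set a_k = (−1)^{k−1} k^{−x} cos(y·log k) and b_k = (−1)^{k−1} k^{−x} sin(y·log k) (with (−1)^0 = 1). Then it is NOT the case that both the series Σ_{k=1}^∞ f(k)·a_k converges to 0 and the series Σ_{k=1}^∞ f(k)·b_k converges to 0. -/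

import Mathlib

/-!
Since `sgn q` is the Möbius function at `q`, the number `F k` is the sum of `μ q` over the odd
divisors `q > 1` of `k`, so `F k = 0` when `k` is a power of two and `F k = -1` otherwise
(`sum_sgn_eq`). Put `s = x + iy` and combine the two series into the complex series with terms
`a k - i b k = (-1) ^ (k - 1) * k ^ (-s)`. If both series tended to `0`, then along `n = 2 ^ (N + 1)`
the partial sums of the alternating series and of its subseries over powers of two would have the
same limit.

The alternating series sums to `(1 - 2 ^ (1 - s)) ζ(s)`, which vanishes here. This is elementary for
`1 < re s`; grouping the terms in pairs gives a series converging locally uniformly on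
`1 / 2 < re s`, and the identity theorem on a convex region of the upper half plane (which avoids
the pole of `ζ`) carries the formula over (`tsum_etaPair`). The subseries over powers of two is
geometric in `z = 2 ^ (-s)`, with sum `1 - z / (1 - z)`, which vanishes only if `z = 1 / 2`.
But `‖z‖ = 2 ^ (-x) > 1 / 2`.
-/

open Filter Finset

/-- Mean value bound for `t ↦ t ^ (-s)` on `[a, a + 1]`. -/
lemma norm_cpow_sub_le {s : ℂ} (hs : 1 / 2 < s.re) {a : ℝ} (ha : 1 ≤ a) :
    ‖(a : ℂ) ^ (-s) - ((a + 1 : ℝ) : ℂ) ^ (-s)‖ ≤ ‖s‖ * a ^ (-(3 / 2) : ℝ) := by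
  have hs0 : -s ≠ 0 := by
    intro h
    rw [neg_eq_zero] at h
    subst h
    norm_num at hs
  have h := (convex_Icc a (a + 1)).norm_image_sub_le_of_norm_hasDerivWithin_le
    (f := fun t : ℝ => (t : ℂ) ^ (-s)) (f' := fun t : ℝ => -s * (t : ℂ) ^ (-s - 1))
    (C := ‖s‖ * a ^ (-(3 / 2) : ℝ)) (x := a + 1) (y := a) ?_ ?_ (by simp) (by simp)
  · simpa using h
  · intro t ht
    exact (hasDerivAt_ofReal_cpow_const (by linarith [ht.1]) hs0).hasDerivWithinAt
  · intro t ht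
    have ht0 : 0 < t := by linarith [ht.1]
    rw [norm_mul, norm_neg, Complex.norm_cpow_eq_rpow_re_of_pos ht0]
    gcongr
    calc t ^ (-s - 1).re ≤ t ^ (-(3 / 2) : ℝ) := by
          apply Real.rpow_le_rpow_of_exponent_le (by linarith [ht.1])
          simp; linarith
      _ ≤ a ^ (-(3 / 2) : ℝ) :=
          Real.rpow_le_rpow_of_nonpos (by linarith) ht.1 (by norm_num)

/-- The sum of the terms of index `2n + 1` and `2n + 2` of the alternating (Dirichlet eta) series
`∑ (-1) ^ (k - 1) k ^ (-s)`. -/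
noncomputable def etaPair (n : ℕ) (s : ℂ) : ℂ :=
  ((2 * n + 1 : ℕ) : ℂ) ^ (-s) - ((2 * n + 2 : ℕ) : ℂ) ^ (-s)

lemma norm_etaPair_le {s : ℂ} (hs : 1 / 2 < s.re) (n : ℕ) :
    ‖etaPair n s‖ ≤ ‖s‖ * ((n + 1 : ℕ) : ℝ) ^ (-(3 / 2) : ℝ) := by
  have h := norm_cpow_sub_le hs (a := 2 * n + 1) (by linarith [n.cast_nonneg (α := ℝ)])
  have h2 : (2 * n + 1 : ℝ) ^ (-(3 / 2) : ℝ) ≤ ((n + 1 : ℕ) : ℝ) ^ (-(3 / 2) : ℝ) := by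
    apply Real.rpow_le_rpow_of_nonpos (by positivity) _ (by norm_num)
    push_cast
    linarith [n.cast_nonneg (α := ℝ)]
  calc ‖etaPair n s‖ = _ := by
        unfold etaPair
        push_cast
        rw [show (2 * n + 2 : ℂ) = 2 * n + 1 + 1 by ring]
    _ ≤ _ := by simpa using h
    _ ≤ _ := by gcongr

lemma summable_bound : Summable fun n : ℕ => ((n + 1 : ℕ) : ℝ) ^ (-(3 / 2) : ℝ) :=
  (summable_nat_add_iff 1).2 (Real.summable_nat_rpow.2 (by norm_num))

lemma summable_etaPair {s : ℂ} (hs : 1 / 2 < s.re) : Summable fun n => etaPair n s :=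
  .of_norm_bounded (summable_bound.mul_left ‖s‖) (norm_etaPair_le hs)

lemma tsum_etaPair_of_one_lt_re {s : ℂ} (hs : 1 < s.re) :
    ∑' n, etaPair n s = (1 - 2 * (2 : ℂ) ^ (-s)) * riemannZeta s := by
  set f : ℕ → ℂ := fun n => ((n + 1 : ℕ) : ℂ) ^ (-s) with hf
  have hz : riemannZeta s = ∑' n : ℕ, f n := by
    rw [zeta_eq_tsum_one_div_nat_add_one_cpow hs]
    simp [hf, Complex.cpow_neg]
  have hsum : Summable f := by
    have := (summable_nat_add_iff 1).2 (Complex.summable_one_div_nat_cpow.2 hs)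
    simpa [hf, Complex.cpow_neg] using this
  have he : Summable fun n : ℕ => f (2 * n) :=
    hsum.comp_injective fun a b h => by simpa using h
  have ho : Summable fun n : ℕ => f (2 * n + 1) :=
    hsum.comp_injective fun a b h => by simpa using h
  have h1 : ∑' n : ℕ, f (2 * n) + ∑' n : ℕ, f (2 * n + 1) = riemannZeta s := by
    rw [hz]
    exact tsum_even_add_odd he ho
  have h2 : ∑' n : ℕ, f (2 * n + 1) = (2 : ℂ) ^ (-s) * riemannZeta s := by
    rw [hz, ← tsum_mul_left]
    congr 1
    funext n
    simp only [hf]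
    rw [show 2 * n + 1 + 1 = 2 * (n + 1) by ring, Nat.cast_mul, Complex.natCast_mul_natCast_cpow]
    simp
  have h3 : ∑' n, etaPair n s = ∑' n : ℕ, f (2 * n) - ∑' n : ℕ, f (2 * n + 1) := he.tsum_sub ho
  rw [h3]
  linear_combination h1 - 2 * h2

/-- The eta series, summed in pairs, equals `(1 - 2 ^ (1 - s)) ζ(s)` for `1 / 2 < re s` in the upper
half plane, by analytic continuation from `1 < re s`. -/
lemma tsum_etaPair {s : ℂ} (hs : 1 / 2 < s.re) (hi : 0 < s.im) :
    ∑' n, etaPair n s = (1 - 2 * (2 : ℂ) ^ (-s)) * riemannZeta s := by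
  -- Intersecting with a ball makes the bound of `norm_etaPair_le` uniform; the radius lets the
  -- region contain both `s` and the base point `2 + i`.
  set R := ‖s‖ + 4 with hR
  let U : Set ℂ := {w | 1 / 2 < w.re} ∩ {w | 0 < w.im} ∩ Metric.ball 0 R
  have hU : IsOpen U :=
    ((isOpen_lt continuous_const Complex.continuous_re).inter
      (isOpen_lt continuous_const Complex.continuous_im)).inter Metric.isOpen_ball
  have hUc : Convex ℝ U :=
    ((convex_halfSpace_re_gt _).inter (convex_halfSpace_im_gt _)).inter (convex_ball _ _)
  have hcpow : ∀ m : ℕ, Differentiable ℂ fun w : ℂ => ((m + 1 : ℕ) : ℂ) ^ (-w) := fun m w =>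
    (differentiableAt_id.neg).const_cpow (Or.inl (Nat.cast_ne_zero.2 m.succ_ne_zero))
  have hf : DifferentiableOn ℂ (fun w => ∑' n, etaPair n w) U := by
    refine Complex.differentiableOn_tsum_of_summable_norm (summable_bound.mul_left R)
      (fun n => ?_) hU fun n w hw => ?_
    · exact ((hcpow (2 * n)).sub (hcpow (2 * n + 1))).differentiableOn
    · refine (norm_etaPair_le hw.1.1 n).trans ?_
      have : ‖w‖ ≤ R := (mem_ball_zero_iff.1 hw.2).le
      gcongr
  have hg : DifferentiableOn ℂ (fun w => (1 - 2 * (2 : ℂ) ^ (-w)) * riemannZeta w) U := by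
    intro w hw
    have hw1 : w ≠ 1 := by
      rintro rfl
      simpa using hw.1.2
    have h2 : DifferentiableAt ℂ (fun w : ℂ => (2 : ℂ) ^ (-w)) w := by
      simpa using! hcpow 1 w
    exact (((h2.const_mul 2).const_sub 1).mul (differentiableAt_riemannZeta hw1)).differentiableWithinAt
  have h0 : (2 + Complex.I : ℂ) ∈ U := by
    refine ⟨⟨?_, ?_⟩, ?_⟩
    · simp; norm_num
    · simp
    · rw [mem_ball_zero_iff]
      have := norm_add_le (2 : ℂ) Complex.I
      simp at this
      linarith [norm_nonneg s]
  refine (hf.analyticOnNhd hU).eqOn_of_preconnected_of_eventuallyEq (hg.analyticOnNhd hU)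
    hUc.isPreconnected h0 ?_ (show s ∈ U from ⟨⟨hs, hi⟩, by simp [hR]⟩)
  filter_upwards [(isOpen_lt continuous_const Complex.continuous_re).mem_nhds
    (show (1 : ℝ) < (2 + Complex.I : ℂ).re by simp)] with w hw
  exact tsum_etaPair_of_one_lt_re hw

/-- The `k`-th term of the Dirichlet eta series, for `1 ≤ k`. -/
noncomputable def etaTerm (s : ℂ) (k : ℕ) : ℂ := (-1) ^ (k - 1) * (k : ℂ) ^ (-s)

lemma sum_etaTerm (s : ℂ) (N : ℕ) :
    ∑ k ∈ Icc 1 (2 * N), etaTerm s k = ∑ n ∈ range N, etaPair n s := by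
  induction N with
  | zero => simp
  | succ N ih =>
    rw [show 2 * (N + 1) = 2 * N + 1 + 1 by ring, sum_Icc_succ_top (by omega),
      sum_Icc_succ_top (by omega), ih, sum_range_succ]
    simp [etaTerm, etaPair, pow_succ, pow_mul]
    ring_nf

lemma two_pow_cpow (s : ℂ) (m : ℕ) : ((2 ^ m : ℕ) : ℂ) ^ s = ((2 : ℂ) ^ s) ^ m := by
  induction m with
  | zero => simp
  | succ m ih =>
    rw [pow_succ, Nat.cast_mul, Complex.natCast_mul_natCast_cpow, ih, pow_succ]
    simp

open scoped Classical in
/-- The terms of the eta series at powers of two: the one at `2 ^ 0` is `1`, and the later ones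
carry a minus sign since their index is even. -/
lemma sum_etaTerm_two_pow {s : ℂ} (N : ℕ) :
    ∑ k ∈ Icc 1 (2 ^ N) with ∃ m, k = 2 ^ m, etaTerm s k
      = 1 - ∑ m ∈ range N, ((2 : ℂ) ^ (-s)) ^ (m + 1) := by
  have h : {k ∈ Icc 1 (2 ^ N) | ∃ m, k = 2 ^ m} = (range (N + 1)).image (2 ^ ·) := by
    ext k
    simp only [mem_filter, mem_Icc, mem_image, mem_range]
    constructor
    · rintro ⟨⟨-, h⟩, m, rfl⟩
      exact ⟨m, Nat.lt_succ_of_le ((Nat.pow_le_pow_iff_right (by norm_num)).1 h), rfl⟩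
    · rintro ⟨m, hm, rfl⟩
      exact ⟨⟨Nat.one_le_two_pow, Nat.pow_le_pow_right (by norm_num) (by omega)⟩, m, rfl⟩
  rw [h, sum_image fun _ _ _ _ h => Nat.pow_right_injective le_rfl h, sum_range_succ',
    sub_eq_add_neg, add_comm, ← sum_neg_distrib]
  congr 1
  · simp [etaTerm]
  · refine sum_congr rfl fun m _ => ?_
    have hodd : Odd (2 ^ (m + 1) - 1) :=
      Nat.Even.sub_odd Nat.one_le_two_pow (by simp [Nat.even_pow]) odd_one
    rw [etaTerm, hodd.neg_one_pow, two_pow_cpow, neg_one_mul]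

open scoped Classical in
open ArithmeticFunction in
/-- The value of `F`: writing `k = 2 ^ j * r` with `r` odd, the sum is `∑ μ q` over the divisors
`q ≠ 1` of `r`, and the sum of `μ` over all divisors of `r` is `1` or `0` as `r = 1` or not. -/
lemma sum_sgn_eq {e : ℕ → ℕ} (he_inj : Function.Injective e)
    (he_range : Set.range e = {q : ℕ | Squarefree q ∧ Odd q ∧ 1 < q})
    {k : ℕ} (hk : k ≠ 0) :
    ∑' i, (-1 : ℝ) ^ (e i).primeFactors.card * (if e i ∣ k then 1 else 0)
      = if ∃ m, k = 2 ^ m then 0 else -1 := by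
  obtain ⟨j, r, hr, rfl⟩ := Nat.exists_eq_two_pow_mul_odd hk
  have hr0 : r ≠ 0 := by rintro rfl; simp at hr
  set g : ℕ → ℝ := fun q =>
    if q ∈ r.divisors.erase 1 then ((moebius q : ℤ) : ℝ) else 0 with hg
  have hmem : ∀ i, Squarefree (e i) ∧ Odd (e i) ∧ 1 < e i := fun i => by
    have : e i ∈ Set.range e := ⟨i, rfl⟩
    rwa [he_range] at this
  have hterm : ∀ i, (-1 : ℝ) ^ (e i).primeFactors.card *
      (if e i ∣ 2 ^ j * r then 1 else 0) = g (e i) := by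
    intro i
    obtain ⟨hsq, ho, h1⟩ := hmem i
    have hd : e i ∣ 2 ^ j * r ↔ e i ∣ r :=
      Nat.Coprime.dvd_mul_left ((Nat.coprime_two_right.2 ho).pow_right j)
    have hω : (e i).primeFactors.card = cardFactors (e i) := by
      rw [← (cardDistinctFactors_eq_cardFactors_iff_squarefree hsq.ne_zero).2 hsq]
      rfl
    simp only [hg, mem_erase, Nat.mem_divisors, hd]
    by_cases h : e i ∣ r
    · simp [h, hr0, h1.ne', moebius_apply_of_squarefree hsq, hω]
    · simp [h]
  have hsupp : Function.support g ⊆ Set.range e := by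
    intro q hq
    simp only [hg, Function.mem_support, ne_eq, ite_eq_right_iff, not_forall, mem_erase,
      Nat.mem_divisors, Int.cast_eq_zero] at hq
    obtain ⟨⟨h1, hqr, -⟩, hμ⟩ := hq
    rw [he_range]
    refine ⟨moebius_ne_zero_iff_squarefree.1 hμ, hr.of_dvd_nat hqr, ?_⟩
    have := Nat.pos_of_dvd_of_pos hqr (Nat.pos_of_ne_zero hr0)
    omega
  have hsum : ∑ q ∈ r.divisors, ((moebius q : ℤ) : ℝ) = if r = 1 then 1 else 0 := by
    have h : ∑ q ∈ r.divisors, moebius q = if r = 1 then 1 else 0 := by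
      rw [← coe_zeta_mul_apply, coe_zeta_mul_moebius, one_apply]
    exact_mod_cast congrArg (Int.cast : ℤ → ℝ) h
  have hpow : (∃ m, 2 ^ j * r = 2 ^ m) ↔ r = 1 := by
    constructor
    · rintro ⟨m, hm⟩
      have : r ∣ 2 ^ m := ⟨2 ^ j, by rw [← hm, mul_comm]⟩
      exact Nat.Coprime.eq_one_of_dvd ((Nat.coprime_two_right.2 hr).pow_right m) this
    · rintro rfl
      exact ⟨j, mul_one _⟩
  rw [tsum_congr hterm, he_inj.tsum_eq hsupp,
    tsum_eq_sum (s := r.divisors.erase 1) (fun q hq => if_neg hq),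
    sum_congr rfl (g := fun q => ((moebius q : ℤ) : ℝ)) (fun q hq => if_pos hq),
    sum_erase_eq_sub (by simp [hr0]), hsum]
  simp only [hpow]
  split_ifs <;> simp

theorem stmt_9
    (e : ℕ → ℕ)
    (he_inj : Function.Injective e)
    (he_range : Set.range e = {q : ℕ | Squarefree q ∧ Odd q ∧ 1 < q})
    (sgn : ℕ → ℝ) (hsgn : ∀ q : ℕ, sgn q = (-1 : ℝ) ^ q.primeFactors.card)
    (δ : ℕ → ℕ → ℝ) (hδ : ∀ k i : ℕ, δ k i = if e i ∣ k then 1 else 0)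
    (F : ℕ → ℝ) (hF : ∀ k : ℕ, F k = ∑' i : ℕ, sgn (e i) * δ k i)
    (x y : ℝ) (hx : 1 / 2 < x) (hx1 : x < 1) (hy : 0 < y)
    (hz : riemannZeta ((x : ℂ) + (y : ℂ) * Complex.I) = 0)
    (a b : ℕ → ℝ)
    (ha : ∀ k : ℕ, 0 < k → a k = (-1 : ℝ) ^ (k - 1) * (k : ℝ) ^ (-x) * Real.cos (y * Real.log k))
    (hb : ∀ k : ℕ, 0 < k → b k = (-1 : ℝ) ^ (k - 1) * (k : ℝ) ^ (-x) * Real.sin (y * Real.log k)) :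
    ¬ (Tendsto (fun n : ℕ => ∑ k ∈ Finset.Icc 1 n, F k * a k) atTop (nhds 0) ∧
       Tendsto (fun n : ℕ => ∑ k ∈ Finset.Icc 1 n, F k * b k) atTop (nhds 0)) := by
  classical
  rintro ⟨hA, hB⟩
  set s : ℂ := (x : ℂ) + (y : ℂ) * Complex.I with hs
  have hre : s.re = x := by simp [hs]
  have him : s.im = y := by simp [hs]
  have hterm : ∀ k : ℕ, 0 < k → (a k : ℂ) - b k * Complex.I = etaTerm s k := by
    intro k hk
    have hk' : (k : ℂ) ≠ 0 := Nat.cast_ne_zero.2 hk.ne'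
    have hexp : (k : ℂ) ^ (-s) = ((k : ℝ) ^ (-x) : ℝ) *
        (Complex.cos (y * Real.log k) - Complex.sin (y * Real.log k) * Complex.I) := by
      rw [hs, neg_add, Complex.cpow_add _ _ hk', Complex.ofReal_cpow (by positivity),
        Complex.cpow_def_of_ne_zero hk' (-(y * Complex.I))]
      have : Complex.log (k : ℂ) * -(y * Complex.I) = (-(y * Real.log k : ℝ) : ℂ) * Complex.I := by
        rw [← Complex.ofReal_natCast, ← Complex.ofReal_log (by positivity)]
        push_cast
        ring
      rw [this, Complex.exp_mul_I, Complex.cos_neg, Complex.sin_neg]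
      push_cast
      ring
    rw [etaTerm, hexp, ha k hk, hb k hk]
    push_cast
    ring
  have hFk : ∀ k : ℕ, 0 < k → F k = if ∃ m, k = 2 ^ m then 0 else -1 := by
    intro k hk
    rw [← sum_sgn_eq he_inj he_range hk.ne', hF]
    simp only [hsgn, hδ]
  -- The hypotheses say that the partial sums of `F k * etaTerm s k` tend to `0`.
  have hAB : Tendsto (fun n : ℕ => ∑ k ∈ Icc 1 n, (F k : ℂ) * etaTerm s k) atTop (nhds 0) := by
    have h := ((Complex.continuous_ofReal.tendsto 0).comp hA).sub
      (((Complex.continuous_ofReal.tendsto 0).comp hB).mul_const Complex.I)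
    simp only [Complex.ofReal_zero, zero_mul, sub_zero] at h
    refine h.congr fun n => ?_
    simp only [Function.comp_apply, Complex.ofReal_sum, sum_mul, ← sum_sub_distrib]
    refine sum_congr rfl fun k hk => ?_
    rw [← hterm k (mem_Icc.1 hk).1]
    push_cast
    ring
  have hsub : Tendsto (fun N : ℕ => ∑ n ∈ range (2 ^ N), etaPair n s) atTop (nhds 0) := by
    have h := (summable_etaPair (s := s) (by rwa [hre])).hasSum.tendsto_sum_nat
    rw [tsum_etaPair (by rwa [hre]) (by rwa [him]), hz, mul_zero] at h
    exact h.comp (tendsto_pow_atTop_atTop_of_one_lt one_lt_two)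
  set z : ℂ := (2 : ℂ) ^ (-s) with hzdef
  have hzn : ‖z‖ = (2 : ℝ) ^ (-x) := by
    have := Complex.norm_cpow_eq_rpow_re_of_pos (x := 2) (by norm_num) (-s)
    rw [Complex.neg_re, hre] at this
    exact_mod_cast this
  have hz1 : ‖z‖ < 1 := by
    rw [hzn]
    exact Real.rpow_lt_one_of_one_lt_of_neg (by norm_num) (by linarith)
  have hz2 : 1 / 2 < ‖z‖ := by
    have h : (2 : ℝ) ^ (-1 : ℝ) < 2 ^ (-x) := Real.rpow_lt_rpow_of_exponent_lt (by norm_num) (by linarith)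
    rw [Real.rpow_neg_one] at h
    rw [hzn]
    linarith
  have hgeom : Tendsto (fun N : ℕ => 1 - ∑ m ∈ range (N + 1), z ^ (m + 1)) atTop
      (nhds (1 - (1 - z)⁻¹ * z)) := by
    have h := (((hasSum_geometric_of_norm_lt_one hz1).mul_right z).tendsto_sum_nat.comp
      (tendsto_add_atTop_nat 1)).const_sub 1
    simpa only [pow_succ] using! h
  have hsplit : ∀ N : ℕ, (1 - ∑ m ∈ range (N + 1), z ^ (m + 1)) =
      ∑ k ∈ Icc 1 (2 ^ (N + 1)), (F k : ℂ) * etaTerm s k + ∑ n ∈ range (2 ^ N), etaPair n s := by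
    intro N
    rw [← sum_etaTerm, ← pow_succ', ← sum_etaTerm_two_pow, sum_filter, ← sum_add_distrib]
    refine sum_congr rfl fun k hk => ?_
    rw [hFk k (mem_Icc.1 hk).1]
    split_ifs <;> simp
  have hlim : Tendsto (fun N : ℕ => 1 - ∑ m ∈ range (N + 1), z ^ (m + 1)) atTop (nhds 0) := by
    simp only [hsplit]
    simpa using! (hAB.comp ((tendsto_pow_atTop_atTop_of_one_lt one_lt_two).comp
      (tendsto_add_atTop_nat 1))).add hsub
  have heq := tendsto_nhds_unique hgeom hlim
  have hne : 1 - z ≠ 0 := by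
    intro h
    rw [← sub_eq_zero.1 h] at hz1
    simp at hz1
  have hhalf : z = 1 / 2 := by
    field_simp at heq
    linear_combination (-1 / 2 : ℂ) * heq
  rw [hhalf] at hz2
  norm_num at hz2
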